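/- Let A(f,g,h) := Σ_{j=1}^∞ ⟨f,χ_j⟩⟨g,χ_j⟩⟨h,r_j⟩ be the continuous trilinear form on L¹[0,1] built from the dyadic indicators χ_j and the Rademacher functions r_j, let P(f) := A(f,f,f) be the associated continuous 3-homogeneous polynomial with symmetric trilinear form P̂(f,g,h) = (1/3)[A(f,g,h) + A(h,f,g) + A(g,h,f)], and let T_P : L¹[0,1] → 𝓛(²L¹[0,1]) be T_P(f)(g,h) = P̂(f,g,h). Then the Rademacher sequence (r_n) converges to 0 weakly in L¹[0,1], but ‖T_P(r_n)‖ does not converge to 0; indeed 3‖T_P(r_n)‖ ≥ 1 − 4·2^{−n} for every n. Consequently, T_P is not completely continuous. -/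

import Mathlib

/-!
The Rademacher functions `r_1, r_2, …` are orthonormal in `L²[0,1]`: for `1 ≤ m < n`, translating
by `2^{-m}` changes the sign of `r_m`, fixes `r_n`, and does not change the integral of a
1-periodic function over a period. Bessel's inequality then gives `⟨r_n, φ⟩ → 0` for every
`φ ∈ L²[0,1]`, in particular for every bounded `φ`.

For the lower bound, evaluate `T_P(r_n)` at `g = h = 2^n χ_n`, a unit vector of `L¹`. As
`⟨g, χ_j⟩ = δ_{jn}`, each of the three series reduces to its `n`-th term. Since `r_n = -1` on `I_n`,
`⟨r_n, χ_n⟩ = -2^{-n}` and `⟨g, r_n⟩ = -1`, so `3 T_P(r_n)(g,g) = 1 + 2·2^{-n}`,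
where the `1` is `⟨r_n, r_n⟩`. Hence `3 ‖T_P(r_n)‖ ≥ 1`, which also rules out complete continuity.
-/

open MeasureTheory Filter Topology

/-- Lebesgue measure restricted to `[0,1]`. -/
noncomputable def mu01 : Measure ℝ := volume.restrict (Set.Icc 0 1)

/-- The `n`-th Rademacher function `r_n (t) = sign (sin (2^n π t))`. -/
noncomputable def radem (n : ℕ) : ℝ → ℝ := fun t => Real.sign (Real.sin (2 ^ n * Real.pi * t))

/-- The characteristic function `χ_j` of the dyadic interval `I_j = (2^{-j}, 2^{-j+1})`. -/
noncomputable def dyadInd (j : ℕ) : ℝ → ℝ :=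
  Set.indicator (Set.Ioo (((2 : ℝ) ^ j)⁻¹) (2 * ((2 : ℝ) ^ j)⁻¹)) fun _ => 1

/-- A sequence `(u_n)` in `L¹[0,1]` is weakly null if `⟨u_n, φ⟩ → 0` for every
`φ ∈ L^∞[0,1]`, i.e. for every bounded measurable `φ`. -/
def WeaklyNullL1 (u : ℕ → Lp ℝ 1 mu01) : Prop :=
  ∀ φ : ℝ → ℝ, Measurable φ → (∃ C : ℝ, ∀ t, |φ t| ≤ C) →
    Tendsto (fun n => ∫ t, u n t * φ t ∂mu01) atTop (𝓝 0)

instance : IsProbabilityMeasure mu01 :=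
  ⟨by simp [mu01]⟩

lemma measurable_radem (n : ℕ) : Measurable (radem n) := by
  have hs : Measurable Real.sign := by
    unfold Real.sign
    exact Measurable.ite measurableSet_Iio measurable_const
      (Measurable.ite measurableSet_Ioi measurable_const measurable_const)
  exact hs.comp (by fun_prop)

lemma abs_radem_le (n : ℕ) (t : ℝ) : |radem n t| ≤ 1 := by
  unfold radem
  rcases Real.sign_apply_eq (Real.sin (2 ^ n * Real.pi * t)) with h | h | h <;> simp [h]

lemma memLp_radem (n : ℕ) (p : ENNReal) : MemLp (radem n) p mu01 :=
  MemLp.of_bound (measurable_radem n).aestronglyMeasurable 1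
    (Eventually.of_forall fun t => by simpa using abs_radem_le n t)

/-- `r_n² = 1` off the countable zero set of `sin (2^n π t)`. -/
lemma radem_sq_ae (n : ℕ) : ∀ᵐ t ∂mu01, radem n t * radem n t = 1 := by
  have hc : (Set.range fun k : ℤ => (k : ℝ) / 2 ^ n).Countable := Set.countable_range _
  have h0 : ∀ᵐ t ∂mu01, t ∉ Set.range fun k : ℤ => (k : ℝ) / 2 ^ n :=
    ae_restrict_of_ae (hc.ae_notMem _)
  filter_upwards [h0] with t ht
  have hne : Real.sin (2 ^ n * Real.pi * t) ≠ 0 := by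
    intro h
    obtain ⟨k, hk⟩ := Real.sin_eq_zero_iff.1 h
    apply ht
    refine ⟨k, ?_⟩
    have h2 : (0 : ℝ) < 2 ^ n := by positivity
    have : (k : ℝ) = 2 ^ n * t := by
      apply mul_right_cancel₀ Real.pi_ne_zero
      linarith
    simp only [this]
    field_simp
  unfold radem
  rcases Real.sign_apply_eq_of_ne_zero _ hne with h | h <;> simp [h]

lemma radem_sq_integral (n : ℕ) : ∫ t, radem n t * radem n t ∂mu01 = 1 := by
  rw [integral_congr_ae (radem_sq_ae n)]
  simp

lemma radem_shift_neg (m : ℕ) (t : ℝ) : radem m (t + (2 ^ m)⁻¹) = -radem m t := by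
  unfold radem
  have : (2 : ℝ) ^ m * Real.pi * (t + (2 ^ m)⁻¹) = 2 ^ m * Real.pi * t + Real.pi := by
    field_simp
  rw [this, Real.sin_add_pi, Real.sign_neg]

lemma radem_periodic (m k : ℕ) : Function.Periodic (radem (m + k + 1)) ((2 ^ m)⁻¹) := by
  intro t
  unfold radem
  have : (2 : ℝ) ^ (m + k + 1) * Real.pi * (t + (2 ^ m)⁻¹)
      = 2 ^ (m + k + 1) * Real.pi * t + (2 ^ k : ℕ) * (2 * Real.pi) := by
    rw [pow_add, pow_add]
    push_cast
    field_simp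
  rw [this, Real.sin_add_nat_mul_two_pi]

lemma radem_periodic_one (m : ℕ) : Function.Periodic (radem (m + 1)) 1 := by
  simpa using radem_periodic 0 m

lemma integral_mu01 (f : ℝ → ℝ) : ∫ t, f t ∂mu01 = ∫ t in (0 : ℝ)..1, f t := by
  rw [intervalIntegral.integral_of_le zero_le_one, mu01, integral_Icc_eq_integral_Ioc]

/-- Orthogonality, by the translation `t ↦ t + 2^{-(m+1)}`. -/
lemma radem_orthogonal (m k : ℕ) :
    ∫ t, radem (m + 1) t * radem (m + 1 + k + 1) t ∂mu01 = 0 := by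
  rw [integral_mu01]
  have hper : Function.Periodic (fun t => radem (m + 1) t * radem (m + 1 + k + 1) t) 1 :=
    (radem_periodic_one m).mul (radem_periodic_one (m + 1 + k))
  have h1 := hper.intervalIntegral_add_eq 0 ((2 ^ (m + 1))⁻¹)
  have h2 := intervalIntegral.integral_comp_add_right (a := 0) (b := 1)
    (fun t => radem (m + 1) t * radem (m + 1 + k + 1) t) ((2 ^ (m + 1))⁻¹)
  have h3 : ∀ t, radem (m + 1) (t + (2 ^ (m + 1))⁻¹) * radem (m + 1 + k + 1) (t + (2 ^ (m + 1))⁻¹)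
      = -(radem (m + 1) t * radem (m + 1 + k + 1) t) := fun t => by
    rw [radem_shift_neg, radem_periodic (m + 1) k t]; ring
  simp only [h3, intervalIntegral.integral_neg] at h2
  rw [zero_add] at h1
  rw [zero_add, add_comm 1] at h2
  linarith

/-- The class of `r_{n+1}` in `L²[0,1]`. The shift leaves out `r_0`, which is a.e. constant. -/
noncomputable def rademL2 (n : ℕ) : Lp ℝ 2 mu01 := (memLp_radem (n + 1) 2).toLp

lemma inner_rademL2 (m : ℕ) (φ : ℝ → ℝ) (hφ : MemLp φ 2 mu01) :
    inner ℝ (rademL2 m) hφ.toLp = ∫ t, radem (m + 1) t * φ t ∂mu01 := by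
  rw [L2.inner_def]
  apply integral_congr_ae
  filter_upwards [(memLp_radem (m + 1) 2).coeFn_toLp, hφ.coeFn_toLp] with t h1 h2
  rw [rademL2, h1, h2]
  simp [mul_comm]

lemma orthonormal_rademL2 : Orthonormal ℝ rademL2 := by
  rw [orthonormal_iff_ite]
  have hlt : ∀ m n, m < n → inner ℝ (rademL2 m) (rademL2 n) = 0 := by
    intro m n h
    obtain ⟨k, rfl⟩ := Nat.exists_eq_add_of_lt h
    have := inner_rademL2 m _ (memLp_radem (m + k + 1 + 1) 2)
    rw [← rademL2] at this
    rw [this, show m + k + 1 + 1 = m + 1 + k + 1 by ring]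
    exact radem_orthogonal m k
  intro m n
  rcases lt_trichotomy m n with h | h | h
  · rw [if_neg h.ne, hlt m n h]
  · subst h
    rw [if_pos rfl]
    exact (inner_rademL2 m _ (memLp_radem (m + 1) 2)).trans (radem_sq_integral _)
  · rw [if_neg h.ne', real_inner_comm, hlt n m h]

/-- Bessel's inequality makes the Rademacher coefficients of `φ` square summable. -/
lemma tendsto_integral_radem (φ : ℝ → ℝ) (hφ : MemLp φ 2 mu01) :
    Tendsto (fun n => ∫ t, radem n t * φ t ∂mu01) atTop (𝓝 0) := by
  rw [← tendsto_add_atTop_iff_nat 1]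
  have h := (orthonormal_rademL2.inner_products_summable (x := hφ.toLp)).tendsto_atTop_zero
  have h2 : Tendsto (fun n => ‖inner ℝ (rademL2 n) hφ.toLp‖) atTop (𝓝 0) := by
    simpa [Real.sqrt_sq_eq_abs] using h.sqrt
  simpa only [inner_rademL2] using tendsto_zero_iff_norm_tendsto_zero.2 h2

lemma measurable_dyadInd (j : ℕ) : Measurable (dyadInd j) :=
  measurable_const.indicator measurableSet_Ioo

lemma integral_dyadInd (n : ℕ) : ∫ t, dyadInd (n + 1) t ∂mu01 = (2 ^ (n + 1))⁻¹ := by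
  have h2 : (0 : ℝ) < ((2 : ℝ) ^ (n + 1))⁻¹ := by positivity
  have hle : 2 * ((2 : ℝ) ^ (n + 1))⁻¹ ≤ 1 := by
    rw [pow_succ, mul_inv]
    have : ((2 : ℝ) ^ n)⁻¹ ≤ 1 := inv_le_one_of_one_le₀ (one_le_pow₀ (by norm_num))
    linarith
  have hsub : Set.Ioo (((2 : ℝ) ^ (n + 1))⁻¹) (2 * ((2 : ℝ) ^ (n + 1))⁻¹) ⊆ Set.Icc 0 1 :=
    fun t ht => ⟨by linarith [ht.1], by linarith [ht.2]⟩
  unfold dyadInd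
  rw [integral_indicator measurableSet_Ioo, mu01, Measure.restrict_restrict measurableSet_Ioo,
    Set.inter_eq_left.2 hsub]
  rw [integral_const, smul_eq_mul, mul_one, measureReal_restrict_apply_univ,
    Real.volume_real_Ioo_of_le (by linarith)]
  ring

lemma dyadInd_mul_self (n : ℕ) (t : ℝ) : dyadInd n t * dyadInd n t = dyadInd n t := by
  unfold dyadInd
  by_cases h : t ∈ Set.Ioo (((2 : ℝ) ^ n)⁻¹) (2 * ((2 : ℝ) ^ n)⁻¹) <;> simp [h]

lemma dyadInd_mul_of_lt {i j : ℕ} (h : i < j) (t : ℝ) : dyadInd i t * dyadInd j t = 0 := by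
  unfold dyadInd
  by_cases hi : t ∈ Set.Ioo (((2 : ℝ) ^ i)⁻¹) (2 * ((2 : ℝ) ^ i)⁻¹)
  · have : t ∉ Set.Ioo (((2 : ℝ) ^ j)⁻¹) (2 * ((2 : ℝ) ^ j)⁻¹) := by
      intro hj
      have h1 : (2 : ℝ) ^ (i + 1) ≤ 2 ^ j := pow_le_pow_right₀ (by norm_num) h
      have h2 : ((2 : ℝ) ^ j)⁻¹ ≤ (2 ^ (i + 1))⁻¹ := inv_anti₀ (by positivity) h1
      rw [pow_succ, mul_inv] at h2
      linarith [hi.1, hj.2]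
    simp [this]
  · simp [hi]

lemma dyadInd_mul_of_ne {i j : ℕ} (h : i ≠ j) (t : ℝ) : dyadInd i t * dyadInd j t = 0 := by
  rcases h.lt_or_gt with h | h
  · exact dyadInd_mul_of_lt h t
  · rw [mul_comm]; exact dyadInd_mul_of_lt h t

/-- `r_n = -1` on `I_n`, since there `2^n π t ∈ (π, 2π)`. -/
lemma radem_mul_dyadInd (n : ℕ) (t : ℝ) : radem n t * dyadInd n t = -dyadInd n t := by
  unfold dyadInd
  by_cases h : t ∈ Set.Ioo (((2 : ℝ) ^ n)⁻¹) (2 * ((2 : ℝ) ^ n)⁻¹)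
  · have hp : (0 : ℝ) < 2 ^ n := by positivity
    have h1 : 1 < 2 ^ n * t := by
      have := mul_lt_mul_of_pos_left h.1 hp
      rwa [mul_inv_cancel₀ hp.ne'] at this
    have h2 : 2 ^ n * t < 2 := by
      have := mul_lt_mul_of_pos_left h.2 hp
      rwa [mul_left_comm, mul_inv_cancel₀ hp.ne', mul_one] at this
    have hs : Real.sin (2 ^ n * Real.pi * t) < 0 := by
      rw [← Real.sin_sub_two_pi]
      apply Real.sin_neg_of_neg_of_neg_pi_lt <;> nlinarith [Real.pi_pos]
    simp [h, radem, Real.sign_of_neg hs]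
  · simp [h]

lemma memLp_dyadInd (n : ℕ) (c : ℝ) : MemLp (fun t => c * dyadInd n t) 1 mu01 := by
  refine MemLp.const_mul (MemLp.of_bound (measurable_dyadInd n).aestronglyMeasurable 1
    (Eventually.of_forall fun t => ?_)) c
  unfold dyadInd
  exact (norm_indicator_le_norm_self _ _).trans (by simp)

/-- The unit vector `2^{n+1} χ_{n+1}` of `L¹[0,1]`. -/
noncomputable def dyadL1 (n : ℕ) : Lp ℝ 1 mu01 := (memLp_dyadInd (n + 1) (2 ^ (n + 1))).toLp

lemma dyadL1_ae (n : ℕ) : dyadL1 n =ᵐ[mu01] fun t => 2 ^ (n + 1) * dyadInd (n + 1) t :=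
  (memLp_dyadInd (n + 1) (2 ^ (n + 1))).coeFn_toLp

lemma dyadL1_norm (n : ℕ) : ‖dyadL1 n‖ = 1 := by
  rw [L1.norm_eq_integral_norm]
  have : ∫ t, ‖dyadL1 n t‖ ∂mu01 = ∫ t, 2 ^ (n + 1) * dyadInd (n + 1) t ∂mu01 := by
    apply integral_congr_ae
    filter_upwards [dyadL1_ae n] with t ht
    rw [ht, Real.norm_of_nonneg]
    exact mul_nonneg (by positivity) (Set.indicator_nonneg (fun _ _ => zero_le_one) t)
  rw [this, integral_const_mul, integral_dyadInd]
  field_simp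

lemma dyadL1_dyadInd (n j : ℕ) :
    ∫ t, dyadL1 n t * dyadInd (j + 1) t ∂mu01 = if j = n then 1 else 0 := by
  have : ∫ t, dyadL1 n t * dyadInd (j + 1) t ∂mu01
      = ∫ t, 2 ^ (n + 1) * (dyadInd (n + 1) t * dyadInd (j + 1) t) ∂mu01 := by
    apply integral_congr_ae
    filter_upwards [dyadL1_ae n] with t ht
    rw [ht, mul_assoc]
  rw [this]
  split_ifs with h
  · subst h
    simp only [dyadInd_mul_self]
    rw [integral_const_mul, integral_dyadInd]
    field_simp
  · have hne : n + 1 ≠ j + 1 := by omega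
    simp [dyadInd_mul_of_ne hne]

lemma dyadL1_radem (n : ℕ) : ∫ t, dyadL1 n t * radem (n + 1) t ∂mu01 = -1 := by
  have : ∫ t, dyadL1 n t * radem (n + 1) t ∂mu01
      = ∫ t, -2 ^ (n + 1) * dyadInd (n + 1) t ∂mu01 := by
    apply integral_congr_ae
    filter_upwards [dyadL1_ae n] with t ht
    rw [ht, mul_assoc, mul_comm (dyadInd _ t), radem_mul_dyadInd]
    ring
  rw [this, integral_const_mul, integral_dyadInd]
  field_simp

/-- Let `A (f,g,h) = Σ_{j≥1} ⟨f,χ_j⟩ ⟨g,χ_j⟩ ⟨h,r_j⟩`, let `P̂` be the symmetrization of `A`,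
and let `T_P (f) (g,h) = P̂ (f,g,h)`. If `(R n)` represents the Rademacher sequence in
`L¹[0,1]`, then `(R n)` is weakly null, `3 ‖T_P (R n)‖ ≥ 1 − 4·2^{−n}` for every `n`, and
consequently `T_P` is not completely continuous. -/
theorem rademacher_weaklyNull_and_TP_not_completelyContinuous
    (R : ℕ → Lp ℝ 1 mu01) (hR : ∀ n : ℕ, (R n : ℝ → ℝ) =ᵐ[mu01] radem n)
    (A : ContinuousMultilinearMap ℝ (fun _ : Fin 3 => Lp ℝ 1 mu01) ℝ)
    (hA : ∀ f g h : Lp ℝ 1 mu01,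
      A ![f, g, h] = ∑' j : ℕ,
        (∫ t, f t * dyadInd (j + 1) t ∂mu01) * (∫ t, g t * dyadInd (j + 1) t ∂mu01) *
          (∫ t, h t * radem (j + 1) t ∂mu01))
    (T : Lp ℝ 1 mu01 → ContinuousMultilinearMap ℝ (fun _ : Fin 2 => Lp ℝ 1 mu01) ℝ)
    (hT : ∀ f g h : Lp ℝ 1 mu01,
      T f ![g, h] = (A ![f, g, h] + A ![h, f, g] + A ![g, h, f]) / 3) :
    WeaklyNullL1 R ∧
    (∀ n : ℕ, 1 ≤ n → 1 - 4 * ((2 : ℝ) ^ n)⁻¹ ≤ 3 * ‖T (R n)‖) ∧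
    ¬ (∀ u : ℕ → Lp ℝ 1 mu01, WeaklyNullL1 u →
        Tendsto (fun n => ‖T (u n)‖) atTop (𝓝 0)) := by
  -- Test `T_P (r_{n+1})` on the pair `(g, g)` with `g = 2^{n+1} χ_{n+1}`.
  have key : ∀ n : ℕ, 1 ≤ 3 * ‖T (R (n + 1))‖ := by
    intro n
    have hrχ : ∫ t, R (n + 1) t * dyadInd (n + 1) t ∂mu01 = -(2 ^ (n + 1))⁻¹ := by
      rw [← integral_dyadInd, ← integral_neg]
      apply integral_congr_ae
      filter_upwards [hR (n + 1)] with t ht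
      rw [ht, radem_mul_dyadInd]
    have hrr : ∫ t, R (n + 1) t * radem (n + 1) t ∂mu01 = 1 := by
      rw [← radem_sq_integral (n + 1)]
      apply integral_congr_ae
      filter_upwards [hR (n + 1)] with t ht
      rw [ht]
    have e1 : A ![R (n + 1), dyadL1 n, dyadL1 n] = (2 ^ (n + 1))⁻¹ := by
      rw [hA, tsum_eq_single n (fun j hj => by simp [dyadL1_dyadInd, hj]),
        hrχ, dyadL1_dyadInd, dyadL1_radem]
      simp
    have e2 : A ![dyadL1 n, R (n + 1), dyadL1 n] = (2 ^ (n + 1))⁻¹ := by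
      rw [hA, tsum_eq_single n (fun j hj => by simp [dyadL1_dyadInd, hj]),
        hrχ, dyadL1_dyadInd, dyadL1_radem]
      simp
    have e3 : A ![dyadL1 n, dyadL1 n, R (n + 1)] = 1 := by
      rw [hA, tsum_eq_single n (fun j hj => by simp [dyadL1_dyadInd, hj]),
        hrr, dyadL1_dyadInd]
      simp
    have hle := (T (R (n + 1))).le_opNorm ![dyadL1 n, dyadL1 n]
    rw [hT, e1, e2, e3] at hle
    simp only [Fin.prod_univ_two, Matrix.cons_val_zero, Matrix.cons_val_one, dyadL1_norm,
      mul_one] at hle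
    have hpos : (0 : ℝ) < (2 ^ (n + 1))⁻¹ := by positivity
    have := (le_abs_self _).trans hle
    linarith
  have hweak : WeaklyNullL1 R := by
    rintro φ hφ ⟨C, hC⟩
    have hmem : MemLp φ 2 mu01 := MemLp.of_bound hφ.aestronglyMeasurable C
      (Eventually.of_forall hC)
    refine (tendsto_integral_radem φ hmem).congr fun n => ?_
    apply integral_congr_ae
    filter_upwards [hR n] with t ht
    rw [ht]
  refine ⟨hweak, ?_, ?_⟩
  · intro n hn
    obtain ⟨m, rfl⟩ := Nat.exists_eq_add_of_le' hn
    have hpos : (0 : ℝ) < (2 ^ (m + 1))⁻¹ := by positivity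
    linarith [key m]
  · intro h
    have h1 := ((tendsto_add_atTop_iff_nat 1).2 (h R hweak)).const_mul 3
    have h2 := ge_of_tendsto' h1 key
    norm_num at h2
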